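/- Let n ≥ 5 and 2 ≤ k ≤ n−2 be integers such that both k and n−k are odd. Then the dual checkboard collection Ĉ^ch_{k,n} does not lie in the D_n-orbit of the checkboard collection C^ch_{k,n}: there is no ρ ∈ D_n with ρ·C^ch_{k,n} = Ĉ^ch_{k,n}. -/

import Mathlib

open Finset

/-- `(a,b,c,d)` is strictly cyclically ordered in `ℤ/nℤ`. -/
def StrictCyclicOrd {n : ℕ} (a b c d : ZMod n) : Prop :=
  0 < (b - a).val ∧ (b - a).val < (c - a).val ∧ (c - a).val < (d - a).val

/-- `I` and `J` are weakly separated subsets of `ℤ/nℤ`. -/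
def WeaklySep {n : ℕ} (I J : Finset (ZMod n)) : Prop :=
  ¬ ∃ a c b d : ZMod n, a ∈ I \ J ∧ c ∈ I \ J ∧ b ∈ J \ I ∧ d ∈ J \ I ∧
      StrictCyclicOrd a b c d

/-- The dihedral group `D_n`, realized as the subgroup of permutations of `ℤ/nℤ`
generated by `σ : i ↦ i + 1` and `τ : i ↦ 2 - i`. -/
def dihedral (n : ℕ) : Subgroup (Equiv.Perm (ZMod n)) :=
  Subgroup.closure {Equiv.addRight (1 : ZMod n), Equiv.subLeft (2 : ZMod n)}

/-- The set `[m] = {1, …, m} ⊆ ℤ/nℤ` (with `[0] = ∅`). -/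
def seg (n m : ℕ) : Finset (ZMod n) := (Finset.Icc 1 m).image (fun t : ℕ => (t : ZMod n))

/-- Rectangle label `I^rec_{i,j} = ([i+j]∖[i]) ∪ ([n]∖[n−k+j])`. -/
def Irec (k n i j : ℕ) : Finset (ZMod n) :=
  (seg n (i + j) \ seg n i) ∪ (seg n n \ seg n (n - k + j))

/-- Checkboard label `I^ch_{i,j} = σ^{−⌈(i+j)/2⌉} I^rec_{i,j}`. -/
def Ich (k n i j : ℕ) : Finset (ZMod n) :=
  (Irec k n i j).image (fun x => x - (((i + j + 1) / 2 : ℕ) : ZMod n))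

/-- Dual rectangle label `Î^rec_{i,j} = [i] ∪ ([k+j]∖[i+j])`. -/
def Drec (k n i j : ℕ) : Finset (ZMod n) :=
  seg n i ∪ (seg n (k + j) \ seg n (i + j))

/-- Dual checkboard label `Î^ch_{i,j} = σ^{−⌈(i+j)/2⌉} Î^rec_{i,j}`. -/
def Dch (k n i j : ℕ) : Finset (ZMod n) :=
  (Drec k n i j).image (fun x => x - (((i + j + 1) / 2 : ℕ) : ZMod n))

/-- The rectangle collection `C^rec_{k,n}`. -/
def Crec (k n : ℕ) : Finset (Finset (ZMod n)) :=
  ((Finset.range (n - k + 1)) ×ˢ (Finset.range (k + 1))).image (fun p => Irec k n p.1 p.2)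

/-- The checkboard collection `C^ch_{k,n}`. -/
def Cch (k n : ℕ) : Finset (Finset (ZMod n)) :=
  ((Finset.range (n - k + 1)) ×ˢ (Finset.range (k + 1))).image (fun p => Ich k n p.1 p.2)

/-- The dual rectangle collection `Ĉ^rec_{k,n}`. -/
def CDrec (k n : ℕ) : Finset (Finset (ZMod n)) :=
  ((Finset.range (k + 1)) ×ˢ (Finset.range (n - k + 1))).image (fun p => Drec k n p.1 p.2)

/-- The dual checkboard collection `Ĉ^ch_{k,n}`. -/
def CDch (k n : ℕ) : Finset (Finset (ZMod n)) :=
  ((Finset.range (k + 1)) ×ˢ (Finset.range (n - k + 1))).image (fun p => Dch k n p.1 p.2)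

/-- `C` is a weakly separated collection of `k`-subsets of `ℤ/nℤ`. -/
def IsWSColl (n k : ℕ) (C : Set (Finset (ZMod n))) : Prop :=
  (∀ I ∈ C, I.card = k) ∧ ∀ I ∈ C, ∀ J ∈ C, WeaklySep I J

/-- `C` is a maximal weakly separated collection of `k`-subsets of `ℤ/nℤ`. -/
def IsMaxWSColl (n k : ℕ) (C : Set (Finset (ZMod n))) : Prop :=
  IsWSColl n k C ∧ ∀ C' : Set (Finset (ZMod n)), IsWSColl n k C' → C ⊆ C' → C' = C

/-!
Cut a subset of `ℤ/nℤ` into maximal cyclic intervals and add up the right ends, or the left ends, of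
two distinct ones. The shift by `⌈(i+j)/2⌉` makes these sums almost independent of `(i,j)`: in a
dual checkboard label two right ends sum to `k` or `k - 1`, and two left ends to `2` or `1`, while
the interior checkboard label at `(i,j)` has two right ends with sum `0` or `-1`, according to the
parity of `i + j`.

A rotation `x ↦ x + r` turns the sums `0, -1` into `2r, 2r - 1`, which must be `k` or `k - 1`; a
reflection `x ↦ a - x` turns them into sums `2a, 2a + 1` of left ends, which must be `2` or `1`.
Since `n` is even, parity in `ℤ/nℤ` makes sense. With `k` odd it matches the even sum with the even
value and the odd sum with the odd one, so that the difference of the two gives `1 = -1`.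
-/

section EndSums

variable {G : Type*} [DecidableEq G]

section Add

variable [Add G]

/-- The elements of `S` from which the step `d` leaves `S`. For `d = 1` and `d = -1` in `ℤ/nℤ` these
are the right and the left ends of the maximal cyclic intervals of `S`; taking the step as a
parameter lets a reflection exchange the two. -/
def ends (d : G) (S : Finset G) : Finset G := {x ∈ S | x + d ∉ S}

/-- The sums of two distinct `d`-ends of `S`, the quantity by which rotated or reflected checkboard
labels are told apart from dual ones. -/
def endSums (d : G) (S : Finset G) : Finset G := (ends d S).offDiag.image fun p => p.1 + p.2

lemma mem_ends {d x : G} {S : Finset G} : x ∈ ends d S ↔ x ∈ S ∧ x + d ∉ S := mem_filter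

lemma ends_union_subset (d : G) (S T : Finset G) : ends d (S ∪ T) ⊆ ends d S ∪ ends d T := by
  intro x
  simp only [mem_ends, mem_union]
  tauto

lemma mem_endSums {d s : G} {S : Finset G} :
    s ∈ endSums d S ↔ ∃ x ∈ ends d S, ∃ y ∈ ends d S, x ≠ y ∧ x + y = s := by
  simp [endSums, and_assoc]

variable {H : Type*} [DecidableEq H] [Add H] {f : G → H} {d : G} {d' : H}

lemma ends_image (hf : f.Injective) (hd : ∀ x, f (x + d) = f x + d') (S : Finset G) :
    ends d' (S.image f) = (ends d S).image f := by
  have mem_image_iff (y : G) : f y ∈ S.image f ↔ y ∈ S := hf.mem_finset_image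
  ext z
  constructor
  · intro hz
    obtain ⟨hzS, hzd⟩ := mem_ends.1 hz
    obtain ⟨x, hx, rfl⟩ := mem_image.1 hzS
    rw [← hd, mem_image_iff] at hzd
    exact mem_image_of_mem f (mem_ends.2 ⟨hx, hzd⟩)
  · intro hz
    obtain ⟨x, hx, rfl⟩ := mem_image.1 hz
    rwa [mem_ends, ← hd, mem_image_iff, mem_image_iff, ← mem_ends]

lemma endSums_image {g : G → H} (hf : f.Injective) (hd : ∀ x, f (x + d) = f x + d')
    (hg : ∀ x y, f x + f y = g (x + y)) (S : Finset G) :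
    endSums d' (S.image f) = (endSums d S).image g := by
  ext s
  simp only [mem_image, mem_endSums, ends_image hf hd]
  constructor
  · rintro ⟨_, ⟨x, hx, rfl⟩, _, ⟨y, hy, rfl⟩, hxy, rfl⟩
    exact ⟨x + y, ⟨x, hx, y, hy, ne_of_apply_ne f hxy, rfl⟩, (hg x y).symm⟩
  · rintro ⟨_, ⟨x, hx, y, hy, hxy, rfl⟩, rfl⟩
    exact ⟨f x, ⟨x, hx, rfl⟩, f y, ⟨y, hy, rfl⟩, hf.ne hxy, hg x y⟩

end Add

lemma endSums_subset_singleton [AddCommMagma G] {d x y : G} {S : Finset G} (h : ends d S ⊆ {x, y}) :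
    endSums d S ⊆ {x + y} := by
  intro s hs
  obtain ⟨u, hu, v, hv, huv, rfl⟩ := mem_endSums.1 hs
  have hu' := h hu
  have hv' := h hv
  simp only [mem_insert, mem_singleton] at hu' hv' ⊢
  rcases hu' with rfl | rfl <;> rcases hv' with rfl | rfl
  · exact absurd rfl huv
  · rfl
  · exact add_comm _ _
  · exact absurd rfl huv

section AddCommGroup

variable [AddCommGroup G]

lemma endSums_image_add_right (d r : G) (S : Finset G) :
    endSums d (S.image (· + r)) = (endSums d S).image (· + (r + r)) :=
  endSums_image (add_left_injective r) (fun x => add_right_comm x d r)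
    (fun x y => add_add_add_comm x r y r) S

lemma endSums_image_sub_left (d a : G) (S : Finset G) :
    endSums (-d) (S.image (a - ·)) = (endSums d S).image (a + a - ·) :=
  endSums_image sub_right_injective (fun x => by abel) (fun x y => by abel) S

end AddCommGroup

lemma endSums_image_sub_ceil_half [AddCommGroupWithOne G] (d : G) (m : ℕ) (S : Finset G) :
    endSums d (S.image fun x => x - (((m + 1) / 2 : ℕ) : G)) =
      (endSums d S).image fun s => s - ((m + m % 2 : ℕ) : G) := by
  have hhalf : m + m % 2 = (m + 1) / 2 + (m + 1) / 2 := by omega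
  simp only [sub_eq_add_neg, endSums_image_add_right, hhalf, Nat.cast_add, neg_add]

end EndSums

section Arcs

variable {n : ℕ}

/-- The cyclic interval `{a + 1, …, b}` of `ℤ/nℤ`, the building block of the
labels. The endpoints are natural numbers, so the order is that of `ℕ`: the arc is empty if `b ≤ a`
and is all of `ℤ/nℤ` if `b` is large, never wrapping around from `a` to a smaller `b`. -/
def arc (n a b : ℕ) : Finset (ZMod n) := (Ioc a b).image (fun t : ℕ => (t : ZMod n))

lemma natCast_zmod_injOn_Ioc (n : ℕ) : Set.InjOn (fun t : ℕ => (t : ZMod n)) (Set.Ioc 0 n) := by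
  intro t ht u hu h
  refine Nat.mod_injOn_Ico 1 n ?_ ?_ ((ZMod.natCast_eq_natCast_iff' t u n).1 h)
  · exact mem_coe.2 (mem_Ico.2 ⟨ht.1, Nat.lt_one_add_iff.2 ht.2⟩)
  · exact mem_coe.2 (mem_Ico.2 ⟨hu.1, Nat.lt_one_add_iff.2 hu.2⟩)

lemma natCast_mem_arc {a b t : ℕ} (hb : b ≤ n) (ht : 0 < t) (htn : t ≤ n) :
    (t : ZMod n) ∈ arc n a b ↔ a < t ∧ t ≤ b := by
  have hsub : (Ioc a b : Set ℕ) ⊆ Set.Ioc 0 n := by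
    simpa only [coe_Ioc] using Set.Ioc_subset_Ioc a.zero_le hb
  rw [← mem_Ioc, ← mem_coe, arc, coe_image]
  exact (natCast_zmod_injOn_Ioc n).mem_image_iff hsub ⟨ht, htn⟩

lemma seg_sdiff_seg {a b : ℕ} (hab : a ≤ b) (hb : b ≤ n) : seg n b \ seg n a = arc n a b := by
  have hinj : Set.InjOn (fun t : ℕ => (t : ZMod n)) (Icc 1 b) :=
    (natCast_zmod_injOn_Ioc n).mono <| by
      rw [coe_Icc]
      exact fun _ ht => ⟨ht.1, ht.2.trans hb⟩
  rw [seg, seg, ← image_sdiff_of_injOn hinj (Icc_subset_Icc_right hab), arc]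
  congr 1
  ext t
  simp only [mem_sdiff, mem_Icc, mem_Ioc]
  omega

lemma ends_one_arc_subset (n a b : ℕ) : ends 1 (arc n a b) ⊆ {(b : ZMod n)} := by
  intro x hx
  obtain ⟨hxS, hx1⟩ := mem_ends.1 hx
  obtain ⟨t, ht, rfl⟩ := mem_image.1 hxS
  have htb : ¬ t + 1 ≤ b := fun h =>
    hx1 (mem_image.2 ⟨t + 1, by grind, by push_cast; rfl⟩)
  have : t = b := by grind
  simp [this]

lemma ends_neg_one_arc_subset (n a b : ℕ) : ends (-1) (arc n a b) ⊆ {(a + 1 : ZMod n)} := by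
  intro x hx
  obtain ⟨hxS, hx1⟩ := mem_ends.1 hx
  obtain ⟨t, ht, rfl⟩ := mem_image.1 hxS
  have hta : ¬ a < t - 1 := fun h =>
    hx1 (mem_image.2 ⟨t - 1, by grind, by rw [Nat.cast_sub (by grind)]; ring⟩)
  have : t = a + 1 := by grind
  simp [this]

end Arcs

section Labels

variable {n k i j : ℕ}

lemma Irec_eq_arc_union_arc (hkn : k ≤ n) (hi : i ≤ n - k) (hj : j ≤ k) :
    Irec k n i j = arc n i (i + j) ∪ arc n (n - k + j) n := by
  rw [Irec, seg_sdiff_seg (by omega) (by omega), seg_sdiff_seg (by omega) le_rfl]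

lemma Drec_eq_arc_union_arc (hkn : k ≤ n) (hi : i ≤ k) (hj : j ≤ n - k) :
    Drec k n i j = arc n 0 i ∪ arc n (i + j) (k + j) := by
  rw [Drec, seg_sdiff_seg (by omega) (by omega)]
  rfl

lemma natCast_mem_Irec {t : ℕ} (hkn : k ≤ n) (hi : i ≤ n - k) (hj : j ≤ k)
    (ht : 0 < t) (htn : t ≤ n) :
    (t : ZMod n) ∈ Irec k n i j ↔ (i < t ∧ t ≤ i + j) ∨ n - k + j < t := by
  rw [Irec_eq_arc_union_arc hkn hi hj, mem_union, natCast_mem_arc (by omega) ht htn,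
    natCast_mem_arc le_rfl ht htn, and_iff_left htn]

lemma add_mem_ends_one_Irec (hi : i < n - k) (hj : 0 < j) (hjk : j ≤ k) :
    ((i + j : ℕ) : ZMod n) ∈ ends 1 (Irec k n i j) := by
  have hkn : k ≤ n := by omega
  rw [mem_ends, ← Nat.cast_add_one, natCast_mem_Irec hkn hi.le hjk (by omega) (by omega),
    natCast_mem_Irec hkn hi.le hjk (by omega) (by omega)]
  omega

lemma zero_mem_ends_one_Irec (hi : 0 < i) (hin : i ≤ n - k) (hj : j < k) :
    (0 : ZMod n) ∈ ends 1 (Irec k n i j) := by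
  have hkn : k < n := by omega
  rw [mem_ends, zero_add, ← ZMod.natCast_self n, ← Nat.cast_one,
    natCast_mem_Irec hkn.le hin hj.le (by omega) le_rfl,
    natCast_mem_Irec hkn.le hin hj.le one_pos (by omega)]
  omega

lemma add_mem_endSums_one_Irec (hi : 0 < i) (hin : i < n - k) (hj : 0 < j) (hjk : j < k) :
    ((i + j : ℕ) : ZMod n) ∈ endSums 1 (Irec k n i j) := by
  have hne : ((i + j : ℕ) : ZMod n) ≠ 0 := by
    rw [Ne, ZMod.natCast_eq_zero_iff]
    exact Nat.not_dvd_of_pos_of_lt (by omega) (by omega)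
  exact mem_endSums.2 ⟨_, add_mem_ends_one_Irec hin hj hjk.le, 0,
    zero_mem_ends_one_Irec hi hin.le hjk, hne, add_zero _⟩

lemma neg_add_mod_two_mem_endSums_one_Ich (hi : 0 < i) (hin : i < n - k) (hj : 0 < j)
    (hjk : j < k) : -(((i + j) % 2 : ℕ) : ZMod n) ∈ endSums 1 (Ich k n i j) := by
  rw [Ich, endSums_image_sub_ceil_half]
  refine mem_image.2 ⟨_, add_mem_endSums_one_Irec hi hin hj hjk, ?_⟩
  push_cast
  abel

lemma Ich_mem_Cch (hi : i ≤ n - k) (hj : j ≤ k) : Ich k n i j ∈ Cch k n :=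
  mem_image.2 ⟨(i, j), mk_mem_product (mem_range_succ_iff.2 hi) (mem_range_succ_iff.2 hj), rfl⟩

lemma endSums_one_Drec_subset (hkn : k ≤ n) (hi : i ≤ k) (hj : j ≤ n - k) :
    endSums 1 (Drec k n i j) ⊆ {(i : ZMod n) + (k + j : ℕ)} := by
  rw [Drec_eq_arc_union_arc hkn hi hj]
  exact endSums_subset_singleton <| (ends_union_subset _ _ _).trans <|
    union_subset_union (ends_one_arc_subset _ _ _) (ends_one_arc_subset _ _ _)

lemma endSums_neg_one_Drec_subset (hkn : k ≤ n) (hi : i ≤ k) (hj : j ≤ n - k) :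
    endSums (-1) (Drec k n i j) ⊆ {(1 : ZMod n) + ((i + j : ℕ) + 1)} := by
  have hleft : ends (-1) (arc n 0 i) ⊆ {1} := by simpa using ends_neg_one_arc_subset n 0 i
  rw [Drec_eq_arc_union_arc hkn hi hj]
  exact endSums_subset_singleton <| (ends_union_subset _ _ _).trans <|
    union_subset_union hleft (ends_neg_one_arc_subset _ _ _)

lemma endSums_one_Dch_subset (hkn : k ≤ n) (hi : i ≤ k) (hj : j ≤ n - k) :
    endSums 1 (Dch k n i j) ⊆ {(k - ((i + j) % 2 : ℕ) : ZMod n)} := by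
  rw [Dch, endSums_image_sub_ceil_half]
  refine (image_subset_image (endSums_one_Drec_subset hkn hi hj)).trans ?_
  rw [image_singleton, singleton_subset_singleton]
  push_cast
  abel

lemma endSums_neg_one_Dch_subset (hkn : k ≤ n) (hi : i ≤ k) (hj : j ≤ n - k) :
    endSums (-1) (Dch k n i j) ⊆ {(2 - ((i + j) % 2 : ℕ) : ZMod n)} := by
  rw [Dch, endSums_image_sub_ceil_half]
  refine (image_subset_image (endSums_neg_one_Drec_subset hkn hi hj)).trans ?_
  rw [image_singleton, singleton_subset_singleton]
  push_cast
  ring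

lemma exists_eq_Dch_of_mem_CDch {K : Finset (ZMod n)} (hK : K ∈ CDch k n) :
    ∃ i ≤ k, ∃ j ≤ n - k, K = Dch k n i j := by
  obtain ⟨⟨i, j⟩, hij, rfl⟩ := mem_image.1 hK
  rw [mem_product, mem_range_succ_iff, mem_range_succ_iff] at hij
  exact ⟨i, hij.1, j, hij.2, rfl⟩

lemma eq_or_eq_of_mem_CDch_of_mem_endSums_one {K : Finset (ZMod n)} {s : ZMod n} (hkn : k ≤ n)
    (hK : K ∈ CDch k n) (hs : s ∈ endSums 1 K) : s = k ∨ s = k + -1 := by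
  obtain ⟨i, hi, j, hj, rfl⟩ := exists_eq_Dch_of_mem_CDch hK
  have hs' := mem_singleton.1 (endSums_one_Dch_subset hkn hi hj hs)
  rcases Nat.mod_two_eq_zero_or_one (i + j) with h | h <;> simp [hs', h, sub_eq_add_neg]

lemma eq_or_eq_of_mem_CDch_of_mem_endSums_neg_one {K : Finset (ZMod n)} {s : ZMod n} (hkn : k ≤ n)
    (hK : K ∈ CDch k n) (hs : s ∈ endSums (-1) K) : s = 1 ∨ s = 1 + 1 := by
  obtain ⟨i, hi, j, hj, rfl⟩ := exists_eq_Dch_of_mem_CDch hK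
  have hs' := mem_singleton.1 (endSums_neg_one_Dch_subset hkn hi hj hs)
  rcases Nat.mod_two_eq_zero_or_one (i + j) with h | h
  · right; rw [hs', h]; norm_num
  · left; rw [hs', h]; norm_num

end Labels

lemma eq_addRight_or_eq_subLeft_of_mem_dihedral {n : ℕ} {ρ : Equiv.Perm (ZMod n)}
    (hρ : ρ ∈ dihedral n) : (∃ r, ρ = Equiv.addRight r) ∨ ∃ a, ρ = Equiv.subLeft a := by
  induction hρ using Subgroup.closure_induction with
  | mem ρ hρ => exact hρ.imp (fun h => ⟨1, h⟩) (fun h => ⟨2, h⟩)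
  | one => exact .inl ⟨0, by ext x; simp⟩
  | mul ρ π _ _ hρ hπ =>
    rcases hρ with ⟨r, rfl⟩ | ⟨r, rfl⟩ <;> rcases hπ with ⟨s, rfl⟩ | ⟨s, rfl⟩
    · exact .inl ⟨s + r, Equiv.ext fun x => add_assoc x s r⟩
    · exact .inr ⟨s + r, Equiv.ext fun x => sub_add_eq_add_sub s x r⟩
    · exact .inr ⟨r - s, Equiv.ext fun x => sub_add_eq_sub_sub_swap r x s⟩
    · exact .inl ⟨r - s, Equiv.ext fun x => show r - (s - x) = x + (r - s) by ring⟩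
  | inv ρ _ hρ =>
    rcases hρ with ⟨r, rfl⟩ | ⟨r, rfl⟩
    · exact .inl ⟨-r, Equiv.ext fun _ => rfl⟩
    · exact .inr ⟨r, Equiv.ext fun x => neg_add_eq_sub x r⟩

lemma zmod_not_even_of_odd {n : ℕ} (hn : Even n) {x : ZMod n} (hx : Odd x) : ¬ Even x := by
  rintro ⟨y, rfl⟩
  have h := hx.map (ZMod.castHom hn.two_dvd (ZMod 2))
  rw [map_add, CharTwo.add_self_eq_zero] at h
  obtain ⟨z, hz⟩ := h
  rw [two_mul, CharTwo.add_self_eq_zero, zero_add] at hz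
  exact zero_ne_one hz

lemma sub_eq_of_even_of_odd {n : ℕ} (hn : Even n) {m d u v : ZMod n} (hm : Odd m) (hd : Odd d)
    (hu : Even u) (hv : Odd v) (hum : u = m ∨ u = m + d) (hvm : v = m ∨ v = m + d) :
    u - v = d := by
  have hu' : u = m + d := hum.resolve_left fun h => zmod_not_even_of_odd hn hm (h ▸ hu)
  have hv' : v = m := hvm.resolve_right fun h => zmod_not_even_of_odd hn hv (h ▸ hm.add_odd hd)
  rw [hu', hv', add_sub_cancel_left]

section Orbit

variable {n k : ℕ} {I J : Finset (ZMod n)}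

lemma image_add_right_notMem_CDch (hn : Even n) (hn2 : 2 < n) (hk : Odd k) (hkn : k ≤ n)
    (hI : 0 ∈ endSums 1 I) (hJ : -1 ∈ endSums 1 J) {r : ZMod n}
    (hIr : I.image (· + r) ∈ CDch k n) : J.image (· + r) ∉ CDch k n := by
  intro hJr
  have : Fact (2 < n) := ⟨hn2⟩
  have hu : 0 + (r + r) ∈ endSums 1 (I.image (· + r)) :=
    endSums_image_add_right 1 r I ▸ mem_image_of_mem _ hI
  have hv : -1 + (r + r) ∈ endSums 1 (J.image (· + r)) :=
    endSums_image_add_right 1 r J ▸ mem_image_of_mem _ hJ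
  have hdiff : 0 + (r + r) - (-1 + (r + r)) = -1 :=
    sub_eq_of_even_of_odd hn hk.natCast odd_neg_one (by simp) (odd_neg_one.add_even (by simp))
      (eq_or_eq_of_mem_CDch_of_mem_endSums_one hkn hIr hu)
      (eq_or_eq_of_mem_CDch_of_mem_endSums_one hkn hJr hv)
  exact ZMod.neg_one_ne_one (by linear_combination -hdiff)

lemma image_sub_left_notMem_CDch (hn : Even n) (hn2 : 2 < n) (hkn : k ≤ n)
    (hI : 0 ∈ endSums 1 I) (hJ : -1 ∈ endSums 1 J) {a : ZMod n}
    (hIa : I.image (a - ·) ∈ CDch k n) : J.image (a - ·) ∉ CDch k n := by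
  intro hJa
  have : Fact (2 < n) := ⟨hn2⟩
  have hu : a + a - 0 ∈ endSums (-1) (I.image (a - ·)) :=
    endSums_image_sub_left 1 a I ▸ mem_image_of_mem _ hI
  have hv : a + a - -1 ∈ endSums (-1) (J.image (a - ·)) :=
    endSums_image_sub_left 1 a J ▸ mem_image_of_mem _ hJ
  have hdiff : a + a - 0 - (a + a - -1) = 1 :=
    sub_eq_of_even_of_odd hn odd_one odd_one (by simp) ((Even.add_self a).sub_odd odd_neg_one)
      (eq_or_eq_of_mem_CDch_of_mem_endSums_neg_one hkn hIa hu)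
      (eq_or_eq_of_mem_CDch_of_mem_endSums_neg_one hkn hJa hv)
  exact ZMod.neg_one_ne_one (by linear_combination hdiff)

end Orbit

/-- if both `k` and `n−k` are odd, the dual checkboard collection is not
in the `D_n`-orbit of the checkboard collection. -/
theorem dual_checkboard_not_in_orbit
    (n k : ℕ) (hn : 5 ≤ n) (hk : 2 ≤ k) (hkn : k ≤ n - 2)
    (hkodd : k % 2 = 1) (hnkodd : (n - k) % 2 = 1) :
    ¬ ∃ ρ ∈ dihedral n, (Cch k n).image (fun I => I.image ρ) = CDch k n := by
  rintro ⟨ρ, hρ, himage⟩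
  have hkn' : k ≤ n := by omega
  have hneven : Even n := Nat.even_iff.2 (by omega)
  have hn2 : 2 < n := by omega
  have hmaps {I} (hI : I ∈ Cch k n) : I.image ρ ∈ CDch k n := himage ▸ mem_image_of_mem _ hI
  have hK₁₁ := hmaps (Ich_mem_Cch (i := 1) (j := 1) (by omega) (by omega))
  have hK₁₂ := hmaps (Ich_mem_Cch (i := 1) (j := 2) (by omega) (by omega))
  have hs₁₁ : (0 : ZMod n) ∈ endSums 1 (Ich k n 1 1) := by
    simpa using neg_add_mod_two_mem_endSums_one_Ich (n := n) (k := k) (i := 1) (j := 1)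
      one_pos (by omega) one_pos (by omega)
  have hs₁₂ : (-1 : ZMod n) ∈ endSums 1 (Ich k n 1 2) := by
    simpa using neg_add_mod_two_mem_endSums_one_Ich (n := n) (k := k) (i := 1) (j := 2)
      one_pos (by omega) two_pos (by omega)
  rcases eq_addRight_or_eq_subLeft_of_mem_dihedral hρ with ⟨r, rfl⟩ | ⟨a, rfl⟩
  · exact image_add_right_notMem_CDch hneven hn2 (Nat.odd_iff.2 hkodd) hkn' hs₁₁ hs₁₂ hK₁₁ hK₁₂
  · exact image_sub_left_notMem_CDch hneven hn2 hkn' hs₁₁ hs₁₂ hK₁₁ hK₁₂
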